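/- arXiv:2509.22840 — 2 statements merged into one kernel-verified Lean document; each statement's English description precedes it below -/
import Mathlib

section
/- There exist an absolute constant C' > 0 and, for each γ ∈ (0,1), a constant c(γ) > 0 such that the following holds. Fix integers m ≥ 2 and 0 ≤ m' ≤ m(m−1), dimensions d ≥ 1 and D_K = Σ_{k=1}^h d_k. Suppose there exist fixed embeddings x_1,…,x_m ∈ ℝ^d with ‖x_v‖₂ ≤ 1 such that for every directed loop-free graph G on {1,…,m} with exactly m' edges there exist U = [U_1|…|U_h], V = [V_1|…|V_h] with U_k, V_k ∈ ℝ^{d×d_k}, ‖U‖_F ≤ 1, ‖V‖_F ≤ 1, and τ ∈ [−1,1] recovering G with margin γ (i.e., max_k x_uᵀ U_k V_kᵀ x_v ≥ τ + γ for every edge (u,v) of G, and ≤ τ − γ for every ordered non-edge with u ≠ v). Then binom(m(m−1), m') ≤ (C'/γ)^{2·d·D_K + 1}; equivalently, d·D_K ≥ c(γ)·log binom(m(m−1), m') − O(1), so D_K = Ω((m'/d)·log(m²/m')). -/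
open Matrix

/-- Squared Frobenius norm of a real matrix. -/
def frobSq {n m : ℕ} (A : Matrix (Fin n) (Fin m) ℝ) : ℝ := ∑ i, ∑ j, A i j ^ 2

/-- The edge set `E` is recovered with margin `γ` by the QK parameters `(U, V, τ)` over
the embeddings `x`: every edge has max-over-heads score `max_k x_uᵀ U_k V_kᵀ x_v ≥ τ + γ`
and every ordered loop-free non-edge has all head scores `≤ τ − γ`. -/
def Recovers {m d h : ℕ} {dk : Fin h → ℕ} (x : Fin m → Fin d → ℝ)
    (U V : ∀ k : Fin h, Matrix (Fin d) (Fin (dk k)) ℝ) (τ γ : ℝ)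
    (E : Finset (Fin m × Fin m)) : Prop :=
  (∀ e ∈ E, ∃ k, τ + γ ≤ Matrix.vecMul (x e.1) (U k) ⬝ᵥ Matrix.vecMul (x e.2) (V k)) ∧
  (∀ u v : Fin m, u ≠ v → (u, v) ∉ E →
    ∀ k, Matrix.vecMul (x u) (U k) ⬝ᵥ Matrix.vecMul (x v) (V k) ≤ τ - γ)

open MeasureTheory Metric Module in
theorem packing_aux {E : Type*} [NormedAddCommGroup E] [NormedSpace ℝ E]
    [FiniteDimensional ℝ E] {ι : Type*} (s : Finset ι) (f : ι → E) (δ : ℝ) (hδ : 0 < δ)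
    (hs : ∀ c ∈ s, ‖f c‖ ≤ 1)
    (h : ∀ c ∈ s, ∀ d ∈ s, c ≠ d → 2 * δ ≤ ‖f c - f d‖) :
    (s.card : ℝ) ≤ ((δ + 1) / δ) ^ finrank ℝ E := by
  borelize E
  let μ : Measure E := Measure.addHaar
  have ρpos : 0 < δ + 1 := by linarith
  set A := ⋃ c ∈ s, ball (f c) δ with hA
  have D : Set.Pairwise (s : Set ι) (Function.onFun Disjoint fun c => ball (f c) δ) := by
    rintro c hc d hd hcd
    apply ball_disjoint_ball
    rw [dist_eq_norm]
    linarith [h c hc d hd hcd]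
  have A_subset : A ⊆ ball (0 : E) (δ + 1) := by
    refine Set.iUnion₂_subset fun x hx => ?_
    apply ball_subset_ball'
    rw [dist_zero_right]
    linarith [hs x hx]
  have I :
    (s.card : ENNReal) * ENNReal.ofReal (δ ^ finrank ℝ E) * μ (ball 0 1) ≤
      ENNReal.ofReal ((δ + 1) ^ finrank ℝ E) * μ (ball 0 1) :=
    calc
      (s.card : ENNReal) * ENNReal.ofReal (δ ^ finrank ℝ E) * μ (ball 0 1) = μ A := by
        rw [hA, measure_biUnion_finset D fun c _ => measurableSet_ball]
        simp only [μ.addHaar_ball_of_pos _ hδ]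
        simp only [Finset.sum_const, nsmul_eq_mul, mul_assoc]
      _ ≤ μ (ball (0 : E) (δ + 1)) := measure_mono A_subset
      _ = ENNReal.ofReal ((δ + 1) ^ finrank ℝ E) * μ (ball 0 1) := by
        simp only [μ.addHaar_ball_of_pos _ ρpos]
  have J : (s.card : ENNReal) * ENNReal.ofReal (δ ^ finrank ℝ E)
      ≤ ENNReal.ofReal ((δ + 1) ^ finrank ℝ E) :=
    (ENNReal.mul_le_mul_iff_left (measure_ball_pos _ _ zero_lt_one).ne' measure_ball_lt_top.ne).1 I
  have := ENNReal.toReal_le_of_le_ofReal (pow_nonneg ρpos.le _) J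
  rw [ENNReal.toReal_mul, ENNReal.toReal_natCast, ENNReal.toReal_ofReal (by positivity)] at this
  rw [div_pow, le_div_iff₀ (by positivity)]
  exact this

theorem vecMul_sq_aux {d n : ℕ} (A : Matrix (Fin d) (Fin n) ℝ) (x : Fin d → ℝ)
    (hx : ∑ r, x r ^ 2 ≤ 1) : ∑ j, (Matrix.vecMul x A j) ^ 2 ≤ frobSq A := by
  unfold frobSq
  rw [Finset.sum_comm]
  refine Finset.sum_le_sum fun j _ => ?_
  have h1 := Finset.sum_mul_sq_le_sq_mul_sq Finset.univ x (fun i => A i j)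
  have h2 : 0 ≤ ∑ i, A i j ^ 2 := Finset.sum_nonneg fun i _ => sq_nonneg _
  calc (Matrix.vecMul x A j) ^ 2 = (∑ i, x i * A i j) ^ 2 := by
        simp [Matrix.vecMul, dotProduct]
    _ ≤ _ := h1
    _ ≤ 1 * ∑ i, A i j ^ 2 := mul_le_mul_of_nonneg_right hx h2
    _ = _ := one_mul _

theorem score_aux {d n : ℕ} (A B : Matrix (Fin d) (Fin n) ℝ) (x y : Fin d → ℝ)
    (hx : ∑ r, x r ^ 2 ≤ 1) (hy : ∑ r, y r ^ 2 ≤ 1) (a b : ℝ) (ha : 0 ≤ a) (hb : 0 ≤ b)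
    (hA : frobSq A ≤ a ^ 2) (hB : frobSq B ≤ b ^ 2) :
    Matrix.vecMul x A ⬝ᵥ Matrix.vecMul y B ≤ a * b := by
  have h1 := Finset.sum_mul_sq_le_sq_mul_sq Finset.univ (Matrix.vecMul x A) (Matrix.vecMul y B)
  have h2 := (vecMul_sq_aux A x hx).trans hA
  have h3 := (vecMul_sq_aux B y hy).trans hB
  apply le_of_sq_le_sq _ (mul_nonneg ha hb)
  rw [mul_pow]
  refine h1.trans (mul_le_mul h2 h3 (Finset.sum_nonneg fun i _ => sq_nonneg _) (sq_nonneg _))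

/-- flatten a family of matrices to a Euclidean vector -/
noncomputable def flat {d h : ℕ} {dk : Fin h → ℕ}
    (U : ∀ k : Fin h, Matrix (Fin d) (Fin (dk k)) ℝ) :
    EuclideanSpace ℝ (Σ k : Fin h, Fin d × Fin (dk k)) :=
  WithLp.toLp 2 (fun p => U p.1 p.2.1 p.2.2)

theorem norm_flat {d h : ℕ} {dk : Fin h → ℕ}
    (U : ∀ k : Fin h, Matrix (Fin d) (Fin (dk k)) ℝ) :
    ‖flat U‖ = Real.sqrt (∑ k, frobSq (U k)) := by
  rw [EuclideanSpace.norm_eq]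
  congr 1
  rw [Fintype.sum_sigma]
  refine Finset.sum_congr rfl fun k _ => ?_
  rw [Fintype.sum_prod_type]
  simp [flat, frobSq]

theorem frobSq_nonneg {d n : ℕ} (A : Matrix (Fin d) (Fin n) ℝ) : 0 ≤ frobSq A :=
  Finset.sum_nonneg fun _ _ => Finset.sum_nonneg fun _ _ => sq_nonneg _

theorem frobSq_le_flat {d h : ℕ} {dk : Fin h → ℕ}
    (U : ∀ k : Fin h, Matrix (Fin d) (Fin (dk k)) ℝ) (k : Fin h) :
    frobSq (U k) ≤ ‖flat U‖ ^ 2 := by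
  rw [norm_flat, Real.sq_sqrt (Finset.sum_nonneg fun _ _ => frobSq_nonneg _)]
  exact Finset.single_le_sum (f := fun k => frobSq (U k)) (fun _ _ => frobSq_nonneg _)
    (Finset.mem_univ k)

theorem score_diff {d h : ℕ} {dk : Fin h → ℕ}
    (U V U' V' : ∀ k : Fin h, Matrix (Fin d) (Fin (dk k)) ℝ) (x y : Fin d → ℝ)
    (hx : ∑ r, x r ^ 2 ≤ 1) (hy : ∑ r, y r ^ 2 ≤ 1) (hV : ‖flat V‖ ≤ 1) (hU' : ‖flat U'‖ ≤ 1)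
    (k : Fin h) :
    Matrix.vecMul x (U k) ⬝ᵥ Matrix.vecMul y (V k) -
      Matrix.vecMul x (U' k) ⬝ᵥ Matrix.vecMul y (V' k) ≤
      ‖flat U - flat U'‖ + ‖flat V - flat V'‖ := by
  have e1 : flat U - flat U' = flat (U - U') := rfl
  have e2 : flat V - flat V' = flat (V - V') := rfl
  have h1 := score_aux ((U - U') k) (V k) x y hx hy _ _ (norm_nonneg _) (norm_nonneg _)
    (frobSq_le_flat (U - U') k) (frobSq_le_flat V k)
  have h2 := score_aux (U' k) ((V - V') k) x y hx hy _ _ (norm_nonneg _) (norm_nonneg _)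
    (frobSq_le_flat U' k) (frobSq_le_flat (V - V') k)
  rw [Pi.sub_apply, Matrix.vecMul_sub, sub_dotProduct] at h1
  rw [Pi.sub_apply, Matrix.vecMul_sub, dotProduct_sub] at h2
  rw [e1, e2]
  nlinarith [norm_nonneg (flat (U - U')), norm_nonneg (flat (V - V'))]

/-- **Description-length lower bound for the QK channel (precision-independent).**
There are `C' > 0` and, for each `γ ∈ (0,1)`, constants `c(γ) > 0` and `K(γ)` such that:
if some unit-norm embeddings `x_1,…,x_m ⊂ ℝ^d` allow every loop-free directed graph on
`m` vertices with exactly `m'` edges to be recovered with margin `γ` by normalized QK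
parameters with total key dimension `D_K = Σ_k dk k`, then
`binom(m(m−1), m') ≤ (C'/γ)^(2·d·D_K + 1)`, equivalently
`d·D_K ≥ c(γ)·log binom(m(m−1), m') − K(γ)`. -/
theorem stmt_13 :
    ∃ C' > (0 : ℝ), ∀ γ : ℝ, 0 < γ → γ < 1 → ∃ c > (0 : ℝ), ∃ K : ℝ,
      ∀ m m' d h : ℕ, 2 ≤ m → m' ≤ m * (m - 1) → 1 ≤ d → ∀ dk : Fin h → ℕ,
      ∀ x : Fin m → Fin d → ℝ, (∀ v, Real.sqrt (∑ r, x v r ^ 2) ≤ 1) →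
      (∀ E : Finset (Fin m × Fin m), (∀ e ∈ E, e.1 ≠ e.2) → E.card = m' →
        ∃ (U V : ∀ k : Fin h, Matrix (Fin d) (Fin (dk k)) ℝ) (τ : ℝ),
          Real.sqrt (∑ k, frobSq (U k)) ≤ 1 ∧
          Real.sqrt (∑ k, frobSq (V k)) ≤ 1 ∧
          |τ| ≤ 1 ∧ Recovers x U V τ γ E) →
      (((m * (m - 1)).choose m' : ℝ) ≤ (C' / γ) ^ (2 * d * (∑ k, dk k) + 1) ∧
        c * Real.log ((m * (m - 1)).choose m') - K ≤ (d * (∑ k, dk k) : ℝ)) := by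
  refine ⟨4, by norm_num, fun γ hγ hγ1 => ?_⟩
  have h4 : 1 < 4 / γ := by rw [lt_div_iff₀ hγ]; linarith
  have hL : 0 < Real.log (4 / γ) := Real.log_pos h4
  refine ⟨1 / (2 * Real.log (4 / γ)), by positivity, 1 / 2, ?_⟩
  intro m m' d h hm hm' hd dk x hx H
  have hx' : ∀ v, ∑ r, x v r ^ 2 ≤ 1 := fun v => by
    have := hx v
    rwa [Real.sqrt_le_one] at this
  have main : (((m * (m - 1)).choose m' : ℕ) : ℝ) ≤ (4 / γ) ^ (2 * d * (∑ k, dk k) + 1) := by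
    classical
    set S : Finset (Finset (Fin m × Fin m)) :=
      (Finset.univ.offDiag : Finset (Fin m × Fin m)).powersetCard m' with hS
    have hScard : S.card = (m * (m - 1)).choose m' := by
      rw [hS, Finset.card_powersetCard, Finset.offDiag_card]
      simp [Nat.mul_sub]
    have hSmem : ∀ E ∈ S, (∀ e ∈ E, e.1 ≠ e.2) ∧ E.card = m' := by
      intro E hE
      rw [hS, Finset.mem_powersetCard] at hE
      refine ⟨fun e he => ?_, hE.2⟩
      have := hE.1 he
      rw [Finset.mem_offDiag] at this
      exact this.2.2
    have H' : ∀ E : Finset (Fin m × Fin m), ∃ (U V : ∀ k : Fin h, Matrix (Fin d) (Fin (dk k)) ℝ)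
        (τ : ℝ), E ∈ S → ‖flat U‖ ≤ 1 ∧ ‖flat V‖ ≤ 1 ∧ |τ| ≤ 1 ∧ Recovers x U V τ γ E := by
      intro E
      by_cases hE : E ∈ S
      · obtain ⟨U, V, τ, h1, h2, h3, h4⟩ := H E (hSmem E hE).1 (hSmem E hE).2
        exact ⟨U, V, τ, fun _ => ⟨by rwa [norm_flat], by rwa [norm_flat], h3, h4⟩⟩
      · exact ⟨0, 0, 0, fun h => absurd h hE⟩
    choose U V τ hP using H'
    have key := packing_aux S (fun E => (flat (U E), flat (V E), τ E)) (γ / 3) (by positivity)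
      (by
        intro E hE
        obtain ⟨h1, h2, h3, -⟩ := hP E hE
        simp only [Prod.norm_def, Real.norm_eq_abs]
        exact max_le h1 (max_le h2 h3))
      (by
        intro E hE F hF hEF
        obtain ⟨h1, h2, h3, hr, -⟩ := hP E hE
        obtain ⟨h1', h2', h3', -, hr'⟩ := hP F hF
        have : ∃ e ∈ E, e ∉ F := by
          by_contra! hcon
          exact hEF (Finset.eq_of_subset_of_card_le hcon
            (by rw [(hSmem E hE).2, (hSmem F hF).2]))
        obtain ⟨e, heE, heF⟩ := this
        obtain ⟨k, hk⟩ := hr e heE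
        have hk' := hr' e.1 e.2 ((hSmem E hE).1 e heE) heF k
        have hd := score_diff (U E) (V E) (U F) (V F) (x e.1) (x e.2) (hx' _) (hx' _) h2 h1' k
        simp only [Prod.mk_sub_mk, Prod.norm_def, Real.norm_eq_abs]
        by_contra! hcon
        have a1 := (le_max_left _ _).trans_lt hcon
        have a2 := (le_max_right _ _).trans_lt hcon
        have a3 := (le_max_left _ _).trans_lt a2
        have a4 := (le_max_right _ _).trans_lt a2
        have a5 := neg_abs_le (τ E - τ F)
        linarith)
    have hfin : Module.finrank ℝ (EuclideanSpace ℝ (Σ k : Fin h, Fin d × Fin (dk k)) ×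
        EuclideanSpace ℝ (Σ k : Fin h, Fin d × Fin (dk k)) × ℝ) = 2 * d * (∑ k, dk k) + 1 := by
      simp only [Module.finrank_prod, finrank_euclideanSpace, Module.finrank_self,
        Fintype.card_sigma, Fintype.card_prod, Fintype.card_fin, ← Finset.mul_sum]
      ring
    rw [hfin, hScard] at key
    refine key.trans (pow_le_pow_left₀ (by positivity) ?_ _)
    rw [div_le_div_iff₀ (by positivity) hγ]
    nlinarith
  refine ⟨main, ?_⟩
  have hpos : (0 : ℝ) < (((m * (m - 1)).choose m' : ℕ) : ℝ) := by
    exact_mod_cast Nat.choose_pos hm'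
  have hlog := Real.log_le_log hpos main
  rw [Real.log_pow] at hlog
  push_cast at hlog
  rw [div_mul_eq_mul_div, one_mul, sub_le_iff_le_add, div_le_iff₀ (by positivity)]
  push_cast
  linarith
end

section
/- For every ε ∈ (0,1] and γ ∈ (0,1) there exist a constant c > 0 and an integer m₀ such that for all m ≥ m₀ and all integers m' with 1 ≤ m' ≤ m^{2−ε}: if there exist embeddings x_1,…,x_m ∈ ℝ^d with ‖x_v‖₂ ≤ 1 and, for every directed loop-free graph on {1,…,m} with exactly m' edges, parameters U = [U_1|…|U_h], V = [V_1|…|V_h] with ‖U‖_F ≤ 1, ‖V‖_F ≤ 1, τ ∈ [−1,1], and total key dimension D_K = Σ_k d_k recovering that graph with margin γ (edges score at least τ + γ and ordered non-edges at most τ − γ under S(u,v) = max_k x_uᵀ U_k V_kᵀ x_v), then d·D_K ≥ c·m'·log m. -/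
open Matrix

open MeasureTheory Metric Set Module in
theorem aux_pack {E : Type*} [NormedAddCommGroup E] [NormedSpace ℝ E] [FiniteDimensional ℝ E]
    (γ : ℝ) (hγ : 0 < γ) (s : Finset E) (hs : ∀ c ∈ s, ‖c‖ ≤ 1)
    (h : ∀ c ∈ s, ∀ d ∈ s, c ≠ d → γ ≤ ‖c - d‖) :
    (s.card : ℝ) ≤ (1 + 2 / γ) ^ finrank ℝ E := by
  borelize E
  let μ : Measure E := Measure.addHaar
  let δ : ℝ := γ / 2
  let ρ : ℝ := γ / 2 + 1
  have δpos : 0 < δ := by positivity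
  have ρpos : 0 < ρ := by positivity
  set A := ⋃ c ∈ s, ball (c : E) δ with hA
  have D : Set.Pairwise (s : Set E) (Function.onFun Disjoint fun c => ball (c : E) δ) := by
    rintro c hc d hd hcd
    apply ball_disjoint_ball
    rw [dist_eq_norm]
    have := h c hc d hd hcd
    simp only [δ]; linarith
  have A_subset : A ⊆ ball (0 : E) ρ := by
    refine iUnion₂_subset fun x hx => ?_
    apply ball_subset_ball'
    rw [dist_zero_right]; exact add_le_add le_rfl (hs x hx)
  have I :
    (s.card : ENNReal) * ENNReal.ofReal (δ ^ finrank ℝ E) * μ (ball 0 1) ≤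
      ENNReal.ofReal (ρ ^ finrank ℝ E) * μ (ball 0 1) :=
    calc
      (s.card : ENNReal) * ENNReal.ofReal (δ ^ finrank ℝ E) * μ (ball 0 1) = μ A := by
        rw [hA, measure_biUnion_finset D fun c _ => measurableSet_ball]
        simp only [μ.addHaar_ball_of_pos _ δpos]
        simp only [Finset.sum_const, nsmul_eq_mul, mul_assoc]
      _ ≤ μ (ball (0 : E) ρ) := measure_mono A_subset
      _ = ENNReal.ofReal (ρ ^ finrank ℝ E) * μ (ball 0 1) := by
        simp only [μ.addHaar_ball_of_pos _ ρpos]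
  have J : (s.card : ENNReal) * ENNReal.ofReal (δ ^ finrank ℝ E) ≤ ENNReal.ofReal (ρ ^ finrank ℝ E) :=
    (ENNReal.mul_le_mul_iff_left (measure_ball_pos _ _ zero_lt_one).ne' measure_ball_lt_top.ne).1 I
  have K := ENNReal.toReal_le_of_le_ofReal (pow_nonneg ρpos.le _) J
  rw [ENNReal.toReal_mul, ENNReal.toReal_natCast, ENNReal.toReal_ofReal (by positivity)] at K
  have e : (1 + 2 / γ) = ρ / δ := by simp only [ρ, δ]; field_simp
  rw [e, div_pow, le_div_iff₀ (by positivity)]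
  exact K

theorem aux_choose (q : ℝ) (hq : 1 ≤ q) (k : ℕ) : ∀ n : ℕ, q * k ≤ n → q ^ k ≤ (n.choose k : ℝ) := by
  induction k with
  | zero => intro n _; simp
  | succ k ih =>
    intro n hn
    cases n with
    | zero =>
      exfalso
      push_cast at hn
      have : (0:ℝ) ≤ k := by positivity
      nlinarith
    | succ n =>
      push_cast at hn
      have h1 := ih n (by nlinarith)
      have h2 : ((n:ℝ) + 1) * (n.choose k) = ((n+1).choose (k+1)) * ((k:ℝ) + 1) := by
        exact_mod_cast Nat.add_one_mul_choose_eq n k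
      have hk : (0:ℝ) < (k:ℝ) + 1 := by positivity
      have hc : (0:ℝ) < q ^ k := by positivity
      have h3 : q ^ (k+1) * ((k:ℝ)+1) ≤ ((n+1).choose (k+1)) * ((k:ℝ) + 1) := by
        rw [← h2, pow_succ]
        calc q ^ k * q * ((k:ℝ)+1) = (q * (k+1)) * q ^ k := by ring
          _ ≤ _ := by gcongr
      exact le_of_mul_le_mul_right h3 hk

theorem aux_vm {d n : ℕ} (x : Fin d → ℝ) (hx : ∑ r, x r ^ 2 ≤ 1) (A : Matrix (Fin d) (Fin n) ℝ) :
    ∑ j, (Matrix.vecMul x A j) ^ 2 ≤ frobSq A := by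
  unfold frobSq
  rw [Finset.sum_comm]
  apply Finset.sum_le_sum
  intro j _
  have := Finset.sum_mul_sq_le_sq_mul_sq Finset.univ x (fun i => A i j)
  have h0 : 0 ≤ ∑ i, A i j ^ 2 := Finset.sum_nonneg fun i _ => sq_nonneg _
  simp only [Matrix.vecMul, dotProduct]
  nlinarith

theorem aux_dot {n : ℕ} (a b : Fin n → ℝ) (A B : ℝ) (hA : 0 ≤ A) (hB : 0 ≤ B)
    (ha : ∑ j, a j ^ 2 ≤ A ^ 2) (hb : ∑ j, b j ^ 2 ≤ B ^ 2) : a ⬝ᵥ b ≤ A * B := by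
  have := Finset.sum_mul_sq_le_sq_mul_sq Finset.univ a b
  apply le_of_sq_le_sq _ (by positivity)
  simp only [dotProduct]
  have h0 : 0 ≤ ∑ j, b j ^ 2 := Finset.sum_nonneg fun i _ => sq_nonneg _
  calc _ ≤ _ := this
    _ ≤ A ^ 2 * B ^ 2 := by gcongr
    _ = _ := by ring

noncomputable def auxEmb {d h : ℕ} {dk : Fin h → ℕ} (U : ∀ k : Fin h, Matrix (Fin d) (Fin (dk k)) ℝ) :
    EuclideanSpace ℝ (Σ k : Fin h, Fin d × Fin (dk k)) :=
  WithLp.toLp 2 (fun p => U p.1 p.2.1 p.2.2)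

theorem auxEmb_norm {d h : ℕ} {dk : Fin h → ℕ} (U : ∀ k : Fin h, Matrix (Fin d) (Fin (dk k)) ℝ) :
    ‖auxEmb U‖ ^ 2 = ∑ k, frobSq (U k) := by
  rw [EuclideanSpace.real_norm_sq_eq]
  simp [auxEmb, frobSq, Fintype.sum_sigma, Fintype.sum_prod_type]

theorem auxEmb_sub {d h : ℕ} {dk : Fin h → ℕ} (U U' : ∀ k : Fin h, Matrix (Fin d) (Fin (dk k)) ℝ) :
    auxEmb U - auxEmb U' = auxEmb (fun k => U k - U' k) := by
  ext p; simp [auxEmb]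

theorem auxEmb_le {d h : ℕ} {dk : Fin h → ℕ} (U : ∀ k : Fin h, Matrix (Fin d) (Fin (dk k)) ℝ)
    (k : Fin h) : frobSq (U k) ≤ ‖auxEmb U‖ ^ 2 := by
  rw [auxEmb_norm]
  exact Finset.single_le_sum (f := fun k => frobSq (U k))
    (fun k _ => Finset.sum_nonneg fun i _ => Finset.sum_nonneg fun j _ => sq_nonneg _)
    (Finset.mem_univ k)

theorem aux_score {d h : ℕ} {dk : Fin h → ℕ} (x y : Fin d → ℝ)
    (hx : ∑ r, x r ^ 2 ≤ 1) (hy : ∑ r, y r ^ 2 ≤ 1)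
    (U V U' V' : ∀ k : Fin h, Matrix (Fin d) (Fin (dk k)) ℝ)
    (hV : ‖auxEmb V‖ ≤ 1) (hU' : ‖auxEmb U'‖ ≤ 1) (k : Fin h) :
    Matrix.vecMul x (U k) ⬝ᵥ Matrix.vecMul y (V k)
      - Matrix.vecMul x (U' k) ⬝ᵥ Matrix.vecMul y (V' k)
      ≤ ‖auxEmb U - auxEmb U'‖ + ‖auxEmb V - auxEmb V'‖ := by
  rw [auxEmb_sub, auxEmb_sub]
  have e : Matrix.vecMul x (U k) ⬝ᵥ Matrix.vecMul y (V k)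
      - Matrix.vecMul x (U' k) ⬝ᵥ Matrix.vecMul y (V' k)
      = Matrix.vecMul x (U k - U' k) ⬝ᵥ Matrix.vecMul y (V k)
      + Matrix.vecMul x (U' k) ⬝ᵥ Matrix.vecMul y (V k - V' k) := by
    rw [Matrix.vecMul_sub, Matrix.vecMul_sub, sub_dotProduct, dotProduct_sub]; ring
  rw [e]
  have h1 := aux_dot _ _ _ _ (norm_nonneg _) (norm_nonneg _)
    ((aux_vm x hx (U k - U' k)).trans (auxEmb_le (fun k => U k - U' k) k))
    ((aux_vm y hy (V k)).trans (auxEmb_le V k))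
  have h2 := aux_dot _ _ _ _ (norm_nonneg _) (norm_nonneg _)
    ((aux_vm x hx (U' k)).trans (auxEmb_le U' k))
    ((aux_vm y hy (V k - V' k)).trans (auxEmb_le (fun k => V k - V' k) k))
  have n1 := norm_nonneg (auxEmb (fun k => U k - U' k))
  have n2 := norm_nonneg (auxEmb (fun k => V k - V' k))
  nlinarith

theorem aux_half {m d h : ℕ} {dk : Fin h → ℕ} (x : Fin m → Fin d → ℝ)
    (hx : ∀ v, ∑ r, x v r ^ 2 ≤ 1)
    (U V U' V' : ∀ k : Fin h, Matrix (Fin d) (Fin (dk k)) ℝ) (τ τ' γ : ℝ)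
    (hV : ‖auxEmb V‖ ≤ 1) (hU' : ‖auxEmb U'‖ ≤ 1)
    (E E' : Finset (Fin m × Fin m)) (hE : ∀ e ∈ E, e.1 ≠ e.2) (hc : E.card = E'.card)
    (hne : E ≠ E') (hτ : τ' ≤ τ) (hR : Recovers x U V τ γ E) (hR' : Recovers x U' V' τ' γ E') :
    2 * γ ≤ ‖auxEmb U - auxEmb U'‖ + ‖auxEmb V - auxEmb V'‖ := by
  have : ¬ E ⊆ E' := fun hs => hne (Finset.eq_of_subset_of_card_le hs hc.ge)
  obtain ⟨e, he, he'⟩ := Finset.not_subset.1 this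
  obtain ⟨k, hk⟩ := hR.1 e he
  have h2 := hR'.2 e.1 e.2 (hE e he) he' k
  have h3 := aux_score (x e.1) (x e.2) (hx _) (hx _) U V U' V' hV hU' k
  linarith

theorem aux_count {m d h : ℕ} {dk : Fin h → ℕ} (m' : ℕ) (γ : ℝ) (hγ : 0 < γ) (x : Fin m → Fin d → ℝ)
    (hx : ∀ v, ∑ r, x v r ^ 2 ≤ 1)
    (H : ∀ E : Finset (Fin m × Fin m), (∀ e ∈ E, e.1 ≠ e.2) → E.card = m' →
        ∃ (U V : ∀ k : Fin h, Matrix (Fin d) (Fin (dk k)) ℝ) (τ : ℝ),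
          Real.sqrt (∑ k, frobSq (U k)) ≤ 1 ∧
          Real.sqrt (∑ k, frobSq (V k)) ≤ 1 ∧
          |τ| ≤ 1 ∧ Recovers x U V τ γ E) :
    ((m * m - m).choose m' : ℝ) ≤ (1 + 2 / γ) ^ (2 * (d * ∑ k, dk k)) := by
  classical
  set S := Finset.powersetCard m' (Finset.univ : Finset (Fin m)).offDiag with hS
  have hS1 : ∀ E ∈ S, (∀ e ∈ E, e.1 ≠ e.2) ∧ E.card = m' := by
    intro E hE
    rw [hS, Finset.mem_powersetCard] at hE
    refine ⟨fun e he => ?_, hE.2⟩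
    have := hE.1 he
    simpa using this
  have H' : ∀ E : Finset (Fin m × Fin m), ∃ (U V : ∀ k : Fin h, Matrix (Fin d) (Fin (dk k)) ℝ) (τ : ℝ),
      E ∈ S → ‖auxEmb U‖ ≤ 1 ∧ ‖auxEmb V‖ ≤ 1 ∧ Recovers x U V τ γ E := by
    intro E
    by_cases hE : E ∈ S
    · obtain ⟨U, V, τ, hU, hV, -, hR⟩ := H E (hS1 E hE).1 (hS1 E hE).2
      refine ⟨U, V, τ, fun _ => ⟨?_, ?_, hR⟩⟩
      · rwa [← auxEmb_norm, Real.sqrt_sq (norm_nonneg _)] at hU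
      · rwa [← auxEmb_norm, Real.sqrt_sq (norm_nonneg _)] at hV
    · exact ⟨0, 0, 0, fun h => absurd h hE⟩
  choose U V τ hH using H'
  let f : Finset (Fin m × Fin m) → EuclideanSpace ℝ (Σ k : Fin h, Fin d × Fin (dk k)) ×
      EuclideanSpace ℝ (Σ k : Fin h, Fin d × Fin (dk k)) := fun E => (auxEmb (U E), auxEmb (V E))
  have key : ∀ E ∈ S, ∀ E' ∈ S, E ≠ E' → γ ≤ ‖f E - f E'‖ := by
    intro E hE E' hE' hne
    obtain ⟨a, b, c⟩ := hH E hE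
    obtain ⟨a', b', c'⟩ := hH E' hE'
    obtain ⟨l, hc⟩ := hS1 E hE
    obtain ⟨l', hc'⟩ := hS1 E' hE'
    have h1 : ‖auxEmb (U E) - auxEmb (U E')‖ ≤ ‖f E - f E'‖ := norm_fst_le (f E - f E')
    have h2 : ‖auxEmb (V E) - auxEmb (V E')‖ ≤ ‖f E - f E'‖ := norm_snd_le (f E - f E')
    rcases le_total (τ E') (τ E) with ht | ht
    · have := aux_half x hx _ _ _ _ _ _ γ b a' E E' l (hc.trans hc'.symm) hne ht c c'
      linarith
    · have := aux_half x hx _ _ _ _ _ _ γ b' a E' E l' (hc'.trans hc.symm) hne.symm ht c' c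
      rw [norm_sub_rev, norm_sub_rev (auxEmb (V E'))] at this
      linarith
  have inj : Set.InjOn f S := by
    intro E hE E' hE' heq
    by_contra hne
    have := key E hE E' hE' hne
    rw [heq, sub_self, norm_zero] at this
    linarith
  have P := aux_pack γ hγ (S.image f) (by
      intro c hc
      obtain ⟨E, hE, rfl⟩ := Finset.mem_image.1 hc
      obtain ⟨a, b, -⟩ := hH E hE
      exact norm_prod_le_iff.2 ⟨a, b⟩) (by
      intro c hc c' hc' hne
      obtain ⟨E, hE, rfl⟩ := Finset.mem_image.1 hc
      obtain ⟨E', hE', rfl⟩ := Finset.mem_image.1 hc'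
      exact key E hE E' hE' (fun h => hne (by rw [h])))
  rw [Finset.card_image_of_injOn inj, hS, Finset.card_powersetCard, Finset.offDiag_card] at P
  simp only [Module.finrank_prod, finrank_euclideanSpace, Fintype.card_sigma, Fintype.card_prod,
    Fintype.card_fin, Finset.card_univ, ← Finset.mul_sum, ← two_mul] at P
  exact P

/-- **Sparse-regime lower bound (`m' ≤ m^{2−ε}`).**
For every `ε ∈ (0,1]` and `γ ∈ (0,1)` there are `c > 0` and `m₀` such that for all
`m ≥ m₀` and all `1 ≤ m' ≤ m^{2−ε}`: if some unit-norm embeddings in `ℝ^d` allow every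
loop-free directed graph on `m` vertices with exactly `m'` edges to be recovered with
margin `γ` by normalized QK parameters of total key dimension `D_K = Σ_k dk k`, then
`d·D_K ≥ c·m'·log m`. -/
theorem stmt_15 (ε γ : ℝ) (hε0 : 0 < ε) (hε1 : ε ≤ 1) (hγ0 : 0 < γ) (hγ1 : γ < 1) :
    ∃ c > (0 : ℝ), ∃ m₀ : ℕ, ∀ m : ℕ, m₀ ≤ m →
      ∀ m' : ℕ, 1 ≤ m' → (m' : ℝ) ≤ (m : ℝ) ^ (2 - ε) →
      ∀ d h : ℕ, 1 ≤ d → ∀ dk : Fin h → ℕ,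
      ∀ x : Fin m → Fin d → ℝ, (∀ v, Real.sqrt (∑ r, x v r ^ 2) ≤ 1) →
      (∀ E : Finset (Fin m × Fin m), (∀ e ∈ E, e.1 ≠ e.2) → E.card = m' →
        ∃ (U V : ∀ k : Fin h, Matrix (Fin d) (Fin (dk k)) ℝ) (τ : ℝ),
          Real.sqrt (∑ k, frobSq (U k)) ≤ 1 ∧
          Real.sqrt (∑ k, frobSq (V k)) ≤ 1 ∧
          |τ| ≤ 1 ∧ Recovers x U V τ γ E) →
      c * m' * Real.log m ≤ ((d * ∑ k, dk k : ℕ) : ℝ) := by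
  set L := Real.log (1 + 2 / γ) with hL
  have hLpos : 0 < L := Real.log_pos (by have : 0 < 2 / γ := by positivity
                                         linarith)
  refine ⟨ε / (4 * L), by positivity, max 2 ⌈(2:ℝ) ^ (2 / ε)⌉₊, ?_⟩
  intro m hm m' hm' hmm d h _ dk x hx H
  have hm2 : 2 ≤ m := (le_max_left _ _).trans hm
  have hmr : (2:ℝ) ≤ m := by exact_mod_cast hm2
  have hm0 : (0:ℝ) < m := by linarith
  have hmc : (2:ℝ) ^ (2 / ε) ≤ m :=
    (Nat.le_ceil _).trans (by exact_mod_cast (le_max_right _ _).trans hm)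
  have hq2 : (2:ℝ) ≤ (m:ℝ) ^ (ε / 2) := by
    have := Real.rpow_le_rpow (by positivity) hmc (show 0 ≤ ε / 2 by positivity)
    rw [← Real.rpow_mul (by norm_num)] at this
    have e : 2 / ε * (ε / 2) = 1 := by field_simp
    rwa [e, Real.rpow_one] at this
  have hx' : ∀ v, ∑ r, x v r ^ 2 ≤ 1 := fun v => by
    have := hx v
    have h2 := (Real.sqrt_le_iff.1 this).2
    linarith
  have C := aux_count m' γ hγ0 x hx' H
  have B := aux_choose ((m:ℝ) ^ (ε / 2)) (by linarith) m' (m * m - m) (by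
    have e1 : (m:ℝ) ^ (2 - ε) * ((m:ℝ) ^ (ε / 2) * (m:ℝ) ^ (ε / 2)) = m * m := by
      rw [← Real.rpow_add hm0, ← Real.rpow_add hm0]
      have : 2 - ε + (ε / 2 + ε / 2) = (2:ℕ) := by push_cast; ring
      rw [this, Real.rpow_natCast]; ring
    rw [Nat.cast_sub (by nlinarith)]
    push_cast
    set q := (m:ℝ) ^ (ε / 2)
    set p := (m:ℝ) ^ (2 - ε)
    have hp : 0 ≤ p := by positivity
    have h1 : q * m' ≤ q * p := by gcongr
    have h2 : p * q * 2 ≤ p * q * q := by gcongr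
    nlinarith)
  have BC := Real.log_le_log (by positivity) (B.trans C)
  rw [Real.log_pow, Real.log_pow, Real.log_rpow hm0, ← hL] at BC
  rw [Nat.cast_mul 2] at BC
  rw [div_mul_eq_mul_div, div_mul_eq_mul_div, div_le_iff₀ (by positivity)]
  push_cast at BC ⊢
  linarith
end
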